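/- Let Ω ⊂ ℝⁿ (n ≥ 2) be a bounded polyhedral domain with singular set S ≠ ∅ and η(x) = dist(x, S). Then there exists a constant κ > 0 such that for every function u : ℝⁿ → ℝ that is twice continuously differentiable on an open neighborhood of the closure of Ω and vanishes on ∂Ω, one has ∫_Ω u(x)²/η(x)² dx + ∫_Ω ‖∇u(x)‖² dx ≤ κ ∫_Ω η(x)² (Δu(x))² dx (an inequality in the extended nonnegative reals). -/

import Mathlib

open MeasureTheory Set Metric
open scoped RealInnerProductSpace ENNReal

noncomputable section

/-- `H` is an affine hyperplane in `ℝⁿ`. -/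
def IsAffineHyperplane {n : ℕ} (H : Set (EuclideanSpace ℝ (Fin n))) : Prop :=
  ∃ (v : EuclideanSpace ℝ (Fin n)) (c : ℝ), v ≠ 0 ∧ H = {x | ⟪v, x⟫ = c}

/-- `Ω` is a bounded polyhedral domain with boundary contained in the union of the minimal
finite family `𝓗` of affine hyperplanes. -/
structure IsPolyhedralDomain {n : ℕ} (Ω : Set (EuclideanSpace ℝ (Fin n)))
    (𝓗 : Finset (Set (EuclideanSpace ℝ (Fin n)))) : Prop where
  isOpen : IsOpen Ω
  isBounded : Bornology.IsBounded Ω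
  frontier_closure : frontier Ω = frontier (closure Ω)
  hyperplane : ∀ H ∈ 𝓗, IsAffineHyperplane H
  subset_union : frontier Ω ⊆ ⋃ H ∈ 𝓗, H
  minimal : ∀ 𝓗' ⊂ 𝓗, ¬ frontier Ω ⊆ ⋃ H ∈ 𝓗', H

/-- The set of singular boundary points: boundary points lying on at least two
distinct hyperplanes of the family `𝓗`. -/
def polySingularSet {n : ℕ} (Ω : Set (EuclideanSpace ℝ (Fin n)))
    (𝓗 : Finset (Set (EuclideanSpace ℝ (Fin n)))) : Set (EuclideanSpace ℝ (Fin n)) :=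
  {x | x ∈ frontier Ω ∧ ∃ H₁ ∈ 𝓗, ∃ H₂ ∈ 𝓗, H₁ ≠ H₂ ∧ x ∈ H₁ ∧ x ∈ H₂}

/-- The Laplace operator `Δu = ∑ⱼ ∂²u/∂xⱼ²`. -/
def laplaceOp {n : ℕ} (u : EuclideanSpace ℝ (Fin n) → ℝ) :
    EuclideanSpace ℝ (Fin n) → ℝ :=
  fun x => ∑ j : Fin n,
    fderiv ℝ (fun y => fderiv ℝ u y (EuclideanSpace.single j 1)) x (EuclideanSpace.single j 1)

open Filter Topology in
/-- First exit time of the ray `x + s ω` from `Ω`. -/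
def exitT {n : ℕ} (Ω : Set (EuclideanSpace ℝ (Fin n))) (ω x : EuclideanSpace ℝ (Fin n)) : ℝ :=
  sInf {s : ℝ | 0 ≤ s ∧ x + s • ω ∉ Ω}

section geom
open Filter Topology
variable {n : ℕ} {Ω : Set (EuclideanSpace ℝ (Fin n))} {ω x : EuclideanSpace ℝ (Fin n)}

lemma exit_mem (hO : IsOpen Ω) (hne : ∃ s : ℝ, 0 ≤ s ∧ x + s • ω ∉ Ω) :
    0 ≤ exitT Ω ω x ∧ x + exitT Ω ω x • ω ∉ Ω := by
  have hc : IsClosed {s : ℝ | 0 ≤ s ∧ x + s • ω ∉ Ω} := by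
    refine IsClosed.and isClosed_Ici ?_
    exact hO.isClosed_compl.preimage (by fun_prop : Continuous fun s : ℝ => x + s • ω)
  exact hc.csInf_mem hne ⟨0, fun s hs => hs.1⟩

lemma exit_le {s : ℝ} (hs : 0 ≤ s) (h : x + s • ω ∉ Ω) : exitT Ω ω x ≤ s :=
  csInf_le ⟨0, fun _ hs => hs.1⟩ ⟨hs, h⟩

lemma exit_in {s : ℝ} (hs : 0 ≤ s) (h : s < exitT Ω ω x) : x + s • ω ∈ Ω := by
  by_contra hc
  exact absurd (exit_le hs hc) (not_le.2 h)

lemma exit_pos (hO : IsOpen Ω) (hne : ∃ s : ℝ, 0 ≤ s ∧ x + s • ω ∉ Ω) (hx : x ∈ Ω) :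
    0 < exitT Ω ω x := by
  rcases (exit_mem hO hne).1.lt_or_eq with h | h
  · exact h
  · have := (exit_mem hO hne).2
    rw [← h] at this
    simp [hx] at this

lemma exit_zero (hx : x ∉ Ω) : exitT Ω ω x = 0 :=
  le_antisymm (exit_le le_rfl (by simpa using hx)) (Real.sInf_nonneg fun _ hs => hs.1)

lemma exit_seg (hO : IsOpen Ω) (hne : ∃ s : ℝ, 0 ≤ s ∧ x + s • ω ∉ Ω) (hx : x ∈ Ω)
    {s : ℝ} (hs : 0 ≤ s) (h : s ≤ exitT Ω ω x) : x + s • ω ∈ closure Ω := by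
  have hp := exit_pos hO hne hx
  have hsub : Ico 0 (exitT Ω ω x) ⊆ (fun s : ℝ => x + s • ω) ⁻¹' Ω :=
    fun s hs => exit_in hs.1 hs.2
  have h2 := closure_mono hsub
  rw [closure_Ico hp.ne] at h2
  have h3 := (by fun_prop : Continuous fun s : ℝ => x + s • ω).closure_preimage_subset Ω
  exact h3 (h2 ⟨hs, h⟩)

lemma exit_frontier (hO : IsOpen Ω) (hne : ∃ s : ℝ, 0 ≤ s ∧ x + s • ω ∉ Ω) (hx : x ∈ Ω) :
    x + exitT Ω ω x • ω ∈ frontier Ω := by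
  rw [hO.frontier_eq]
  exact ⟨exit_seg hO hne hx (exit_mem hO hne).1 le_rfl, (exit_mem hO hne).2⟩

lemma exit_shift (hO : IsOpen Ω) (hne : ∃ s : ℝ, 0 ≤ s ∧ x + s • ω ∉ Ω) {t : ℝ} (ht : 0 ≤ t)
    (h : t < exitT Ω ω x) : exitT Ω ω (x + t • ω) = exitT Ω ω x - t := by
  have hm := exit_mem hO hne
  have e : ∀ s : ℝ, x + t • ω + s • ω = x + (t + s) • ω := fun s => by rw [add_smul, add_assoc]
  apply le_antisymm
  · apply exit_le (by linarith)
    rw [e]; simpa using hm.2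
  · refine le_csInf ⟨exitT Ω ω x - t, by linarith, ?_⟩ ?_
    · rw [e]; simpa using hm.2
    · rintro s ⟨hs, hs2⟩
      rw [e] at hs2
      linarith [exit_le (by linarith) hs2]

lemma exit_exists (hb : Bornology.IsBounded Ω) (hω : ω ≠ 0) (x : EuclideanSpace ℝ (Fin n)) :
    ∃ s : ℝ, 0 ≤ s ∧ x + s • ω ∉ Ω := by
  obtain ⟨R, hR⟩ := hb.subset_closedBall x
  have hw : 0 < ‖ω‖ := norm_pos_iff.2 hω
  refine ⟨(|R| + 1) / ‖ω‖, by positivity, fun h => ?_⟩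
  have := hR h
  rw [mem_closedBall, dist_eq_norm, add_sub_cancel_left, norm_smul, Real.norm_eq_abs,
    abs_of_nonneg (by positivity), div_mul_cancel₀ _ hw.ne'] at this
  linarith [le_abs_self R]

lemma exit_measurable (hO : IsOpen Ω) (hb : Bornology.IsBounded Ω) (hω : ω ≠ 0) :
    Measurable (exitT Ω ω) := by
  refine measurable_of_Ioi fun t => ?_
  rcases lt_or_ge t 0 with ht | ht
  · convert MeasurableSet.univ
    ext x
    simpa using ht.trans_le (exit_mem hO (exit_exists hb hω x)).1
  · have : exitT Ω ω ⁻¹' Ioi t = {x | ∀ s ∈ Icc 0 t, x + s • ω ∈ Ω} := by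
      ext x
      constructor
      · intro h s hs
        exact exit_in hs.1 (lt_of_le_of_lt hs.2 h)
      · intro h
        by_contra hc
        have hm := exit_mem hO (exit_exists hb hω x)
        exact hm.2 (h _ ⟨hm.1, not_lt.1 hc⟩)
    rw [this]
    apply IsOpen.measurableSet
    rw [isOpen_iff_mem_nhds]
    intro x hx
    refine isCompact_Icc.eventually_forall_of_forall_eventually
      (P := fun x s => x + s • ω ∈ Ω) fun s hs => ?_
    have : IsOpen ((fun z : EuclideanSpace ℝ (Fin n) × ℝ => z.1 + z.2 • ω) ⁻¹' Ω) :=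
      hO.preimage (by fun_prop)
    exact this.mem_nhds (hx s hs)

/-- Lipschitz continuity of the zero extension. -/
lemma lip_indicator (hO : IsOpen Ω) (hb : Bornology.IsBounded Ω)
    {U : Set (EuclideanSpace ℝ (Fin n))} (hU : IsOpen U) (hUc : closure Ω ⊆ U)
    {w : EuclideanSpace ℝ (Fin n) → ℝ} (hw : ContDiffOn ℝ 1 w U)
    (hz : ∀ x ∈ frontier Ω, w x = 0) :
    ∃ L : ℝ, 0 ≤ L ∧ ∀ x y, |Ω.indicator w x - Ω.indicator w y| ≤ L * ‖x - y‖ := by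
  have hcomp : IsCompact (closure Ω) := hb.isCompact_closure
  have hcont : ContinuousOn (fderiv ℝ w) (closure Ω) :=
    (hw.continuousOn_fderiv_of_isOpen hU le_rfl).mono hUc
  obtain ⟨L, hL⟩ := hcomp.exists_bound_of_continuousOn hcont
  have hL' : ∀ x ∈ closure Ω, ‖fderiv ℝ w x‖ ≤ max L 0 := fun x hx => (hL x hx).trans (le_max_left _ _)
  have hL0 : 0 ≤ max L 0 := le_max_right _ _
  generalize max L 0 = L' at hL' hL0
  have mvt : ∀ x y, segment ℝ x y ⊆ closure Ω → |w x - w y| ≤ L' * ‖x - y‖ := by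
    intro x y hs
    have := (convex_segment x y).norm_image_sub_le_of_norm_hasFDerivWithin_le (𝕜 := ℝ) (f := w)
      (f' := fderiv ℝ w) (C := L') (fun z hz => ((hw.differentiableOn one_ne_zero).differentiableAt
        (hU.mem_nhds (hUc (hs hz)))).hasFDerivAt.hasFDerivWithinAt) (fun z hz => hL' z (hs hz))
      (right_mem_segment ℝ x y) (left_mem_segment ℝ x y)
    simpa using this
  have out : ∀ x z, x ∈ Ω → z ∉ Ω → |w x| ≤ L' * ‖x - z‖ := by
    intro x z hx hzn
    have h1 : x + (1:ℝ) • (z - x) ∉ Ω := by simpa using hzn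
    have hne : ∃ s : ℝ, 0 ≤ s ∧ x + s • (z - x) ∉ Ω := ⟨1, zero_le_one, h1⟩
    have hle := exit_le zero_le_one h1
    have hm := exit_mem hO hne
    have hf := hz _ (exit_frontier hO hne hx)
    have := mvt x (x + exitT Ω (z - x) x • (z - x)) (by
      rw [segment_eq_image']
      rintro _ ⟨θ, hθ, rfl⟩
      simp only [add_sub_cancel_left, smul_smul]
      exact exit_seg hO hne hx (mul_nonneg hθ.1 hm.1) (mul_le_of_le_one_left hm.1 hθ.2))
    rw [hf, sub_zero, sub_add_cancel_left, norm_neg, norm_smul, Real.norm_eq_abs, abs_of_nonneg hm.1] at this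
    refine this.trans ?_
    rw [norm_sub_rev x z]
    exact mul_le_mul_of_nonneg_left (mul_le_of_le_one_left (norm_nonneg _) hle) hL0
  refine ⟨L', hL0, fun x y => ?_⟩
  by_cases hx : x ∈ Ω <;> by_cases hy : y ∈ Ω
  · rw [indicator_of_mem hx, indicator_of_mem hy]
    by_cases hs : segment ℝ x y ⊆ Ω
    · exact mvt x y (hs.trans subset_closure)
    · obtain ⟨z, hzs, hzn⟩ := not_subset.1 hs
      have h1 := out x z hx hzn
      have h2 := out y z hy hzn
      have h3 : ‖x - z‖ + ‖z - y‖ = ‖x - y‖ := by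
        have := dist_add_dist_of_mem_segment hzs
        simpa [dist_eq_norm] using this
      rw [← h3]
      rw [norm_sub_rev y z] at h2
      have := abs_sub (w x) (w y)
      linarith
  · rw [indicator_of_mem hx, indicator_of_notMem hy, sub_zero]
    exact out x y hx hy
  · rw [indicator_of_notMem hx, indicator_of_mem hy, zero_sub, abs_neg, norm_sub_rev]
    exact out y x hy hx
  · rw [indicator_of_notMem hx, indicator_of_notMem hy]
    simp; positivity

/-- Vanishing of the integral of a directional derivative. -/
lemma integral_dir_zero {g g' : EuclideanSpace ℝ (Fin n) → ℝ} (hg : Measurable g)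
    {M K : ℝ} (hM : ∀ x, |g x| ≤ M) (hb : Bornology.IsBounded Ω) (hsupp : ∀ x ∉ Ω, g x = 0)
    (hK : ∀ x, ∀ t : ℝ, 0 < t → |g (x + t • ω) - g x| ≤ K * t)
    (hlim : ∀ᵐ x, Tendsto (fun t : ℝ => t⁻¹ * (g (x + t • ω) - g x)) (𝓝[>] 0) (𝓝 (g' x))) :
    ∫ x, g' x = 0 := by
  obtain ⟨R, hR⟩ := hb.subset_closedBall 0
  have hgint : Integrable g := by
    have h1 : IntegrableOn g (closedBall 0 R) :=
      Measure.integrableOn_of_bounded (M := M) measure_closedBall_lt_top.ne hg.aestronglyMeasurable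
        (Eventually.of_forall hM)
    exact h1.integrable_of_forall_notMem_eq_zero fun x hx => hsupp x fun h => hx (hR h)
  have key := tendsto_integral_filter_of_dominated_convergence (μ := volume)
    (l := 𝓝[>] (0:ℝ)) (F := fun (t : ℝ) x => t⁻¹ * (g (x + t • ω) - g x)) (f := g')
    ((closedBall 0 (R + ‖ω‖)).indicator fun _ => K) ?_ ?_ ?_ hlim
  · refine tendsto_nhds_unique key (tendsto_const_nhds.congr fun t => ?_)
    rw [integral_const_mul, integral_sub (hgint.comp_add_right _) hgint,
      integral_add_right_eq_self, sub_self, mul_zero]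
  · refine Eventually.of_forall fun t => Measurable.aestronglyMeasurable ?_
    exact measurable_const.mul ((hg.comp (measurable_add_const _)).sub hg)
  · have : ∀ᶠ t : ℝ in 𝓝[>] 0, t ∈ Ioc (0:ℝ) 1 := Ioc_mem_nhdsGT one_pos
    filter_upwards [this] with t ht
    refine Eventually.of_forall fun x => ?_
    by_cases hx : x ∈ closedBall 0 (R + ‖ω‖)
    · rw [indicator_of_mem hx, Real.norm_eq_abs, abs_mul, abs_of_pos (inv_pos.2 ht.1),
        inv_mul_le_iff₀ ht.1, mul_comm t]
      exact hK x t ht.1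
    · rw [indicator_of_notMem hx]
      rw [mem_closedBall, dist_zero_right, not_le] at hx
      have h1 : g x = 0 := hsupp x fun h => by
        have := hR h
        rw [mem_closedBall, dist_zero_right] at this
        linarith [norm_nonneg ω]
      have h2 : g (x + t • ω) = 0 := hsupp _ fun h => by
        have := hR h
        rw [mem_closedBall, dist_zero_right] at this
        have h3 : ‖x‖ ≤ ‖x + t • ω‖ + ‖t • ω‖ := by
          simpa using norm_sub_le (x + t • ω) (t • ω)
        rw [norm_smul, Real.norm_eq_abs, abs_of_pos ht.1] at h3
        nlinarith [norm_nonneg ω, ht.2]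
      simp [h1, h2]
  · rw [integrable_indicator_iff measurableSet_closedBall]
    exact integrableOn_const measure_closedBall_lt_top.ne
end geom

section analysis
open Filter Topology
variable {n : ℕ} {Ω : Set (EuclideanSpace ℝ (Fin n))} {ω : EuclideanSpace ℝ (Fin n)}

lemma dir_tendsto {g : EuclideanSpace ℝ (Fin n) → ℝ} {x : EuclideanSpace ℝ (Fin n)}
    (hx : x ∉ closure Ω) (hsupp : ∀ x ∉ Ω, g x = 0) :
    Tendsto (fun t : ℝ => t⁻¹ * (g (x + t • ω) - g x)) (𝓝[>] 0) (𝓝 0) := by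
  have hc : Continuous fun t : ℝ => x + t • ω := by fun_prop
  have h1 : ∀ᶠ t : ℝ in 𝓝 0, x + t • ω ∈ (closure Ω)ᶜ :=
    (isClosed_closure.isOpen_compl.preimage hc).mem_nhds (by simpa using hx)
  refine tendsto_const_nhds.congr' ?_
  filter_upwards [h1.filter_mono nhdsWithin_le_nhds] with t ht
  rw [hsupp _ fun h => ht (subset_closure h), hsupp _ fun h => hx (subset_closure h)]
  simp

lemma integral_fderiv_zero (hO : IsOpen Ω) (hb : Bornology.IsBounded Ω)
    (hnull : volume (frontier Ω) = 0)
    {U : Set (EuclideanSpace ℝ (Fin n))} (hU : IsOpen U) (hUc : closure Ω ⊆ U)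
    {w : EuclideanSpace ℝ (Fin n) → ℝ} (hw : ContDiffOn ℝ 1 w U)
    (hz : ∀ x ∈ frontier Ω, w x = 0) (ω : EuclideanSpace ℝ (Fin n)) :
    ∫ x in Ω, fderiv ℝ w x ω = 0 := by
  obtain ⟨L, hL0, hL⟩ := lip_indicator hO hb hU hUc hw hz
  have hcont : Continuous (Ω.indicator w) :=
    (LipschitzWith.of_dist_le_mul (K := ⟨L, hL0⟩) fun x y => by
      rw [dist_eq_norm, dist_eq_norm]; exact hL x y).continuous
  have hMc := hb.isCompact_closure.exists_bound_of_continuousOn hcont.continuousOn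
  obtain ⟨M, hM⟩ := hMc
  rw [← integral_indicator hO.measurableSet]
  refine integral_dir_zero (Ω := Ω) (ω := ω) (g := Ω.indicator w) (M := max M 0) (K := L * ‖ω‖)
    hcont.measurable ?_ hb (fun x hx => indicator_of_notMem hx _) ?_ ?_
  · intro x
    by_cases hx : x ∈ Ω
    · exact (hM x (subset_closure hx)).trans (le_max_left _ _)
    · simp [indicator_of_notMem hx]
  · intro x t ht
    refine (hL _ _).trans ?_
    rw [add_sub_cancel_left, norm_smul, Real.norm_eq_abs, abs_of_pos ht]
    exact le_of_eq (by ring)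
  · have : ∀ᵐ x, x ∉ frontier Ω := measure_eq_zero_iff_ae_notMem.1 hnull
    filter_upwards [this] with x hx
    by_cases hxO : x ∈ Ω
    · rw [indicator_of_mem hxO (fun x => fderiv ℝ w x ω)]
      have hd : HasFDerivAt (Ω.indicator w) (fderiv ℝ w x) x := by
        have := ((hw.differentiableOn one_ne_zero).differentiableAt
          (hU.mem_nhds (hUc (subset_closure hxO)))).hasFDerivAt
        refine this.congr_of_eventuallyEq ?_
        filter_upwards [hO.mem_nhds hxO] with y hy
        exact indicator_of_mem hy _
      have h2 := (hd.hasLineDerivAt ω)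
      have h3 := HasDerivAt.tendsto_slope_zero_right h2
      simpa using h3
    · have hxc : x ∉ closure Ω := fun h => hx (by rw [hO.frontier_eq]; exact ⟨h, hxO⟩)
      rw [indicator_of_notMem hxO (fun x => fderiv ℝ w x ω)]
      exact dir_tendsto hxc fun y hy => indicator_of_notMem hy _

set_option maxHeartbeats 1000000 in
lemma hardy_dir (hO : IsOpen Ω) (hb : Bornology.IsBounded Ω)
    (hnull : volume (frontier Ω) = 0) {u : EuclideanSpace ℝ (Fin n) → ℝ}
    (hd : ∀ x ∈ Ω, DifferentiableAt ℝ u x) {L : ℝ} (hL0 : 0 ≤ L)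
    (hL : ∀ x y, |Ω.indicator u x - Ω.indicator u y| ≤ L * ‖x - y‖) (hω : ω ≠ 0)
    (hint : IntegrableOn (fun x => (fderiv ℝ u x ω) ^ 2) Ω) :
    IntegrableOn (fun x => (u x / exitT Ω ω x) ^ 2) Ω ∧
    ∫ x in Ω, (u x / exitT Ω ω x) ^ 2 ≤ 4 * ∫ x in Ω, (fderiv ℝ u x ω) ^ 2 := by
  set v := Ω.indicator u with hv
  set d := exitT Ω ω with hdef
  have hcont : Continuous v :=
    (LipschitzWith.of_dist_le_mul (K := ⟨L, hL0⟩) fun x y => by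
      rw [dist_eq_norm, dist_eq_norm]; exact hL x y).continuous
  have hdm : Measurable d := exit_measurable hO hb hω
  have hex := fun x => exit_exists hb hω x
  have hd0 : ∀ x, 0 ≤ d x := fun x => (exit_mem hO (hex x)).1
  have hv0 : ∀ x ∉ Ω, v x = 0 := fun x hx => indicator_of_notMem hx _
  have hvu : ∀ x ∈ Ω, v x = u x := fun x hx => indicator_of_mem hx _
  set Q := L * ‖ω‖ with hQ
  have hQ0 : 0 ≤ Q := by positivity
  have hlip : ∀ x, ∀ s t : ℝ, s ≤ t → |v (x + t • ω) - v (x + s • ω)| ≤ Q * (t - s) := by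
    intro x s t hst
    refine (hL _ _).trans ?_
    rw [add_sub_add_left_eq_sub, ← sub_smul, norm_smul, Real.norm_eq_abs,
      abs_of_nonneg (by linarith)]
    exact le_of_eq (by rw [hQ]; ring)
  have hvd : ∀ x, |v x| ≤ Q * d x := by
    intro x
    have h1 := hlip x 0 (d x) (hd0 x)
    rw [hv0 _ (exit_mem hO (hex x)).2] at h1
    simpa using h1
  have hq : ∀ x, |v x / d x| ≤ Q := by
    intro x
    rw [abs_div, abs_of_nonneg (hd0 x)]
    exact div_le_of_le_mul₀ (hd0 x) hQ0 (hvd x)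
  have hfin : volume Ω ≠ ⊤ := hb.measure_lt_top.ne
  have hAint : IntegrableOn (fun x => (v x / d x) ^ 2) Ω := by
    refine Measure.integrableOn_of_bounded (M := Q ^ 2) hfin
      ((hcont.measurable.div hdm).pow_const 2).aestronglyMeasurable
      (Eventually.of_forall fun x => ?_)
    rw [norm_pow, Real.norm_eq_abs]
    exact pow_le_pow_left₀ (abs_nonneg _) (hq x) 2
  have hpd : Measurable fun x => fderiv ℝ u x ω := measurable_fderiv_apply_const ℝ u ω
  obtain ⟨D, hD⟩ : ∃ D, ∀ x, d x ≤ D := by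
    obtain ⟨R, hR⟩ := hb.subset_closedBall 0
    have hw : 0 < ‖ω‖ := norm_pos_iff.2 hω
    refine ⟨2 * (|R| + 1) / ‖ω‖, fun x => ?_⟩
    by_cases hx : x ∈ Ω
    · apply exit_le (by positivity)
      intro h
      have h1 := hR hx
      have h2 := hR h
      rw [mem_closedBall, dist_zero_right] at h1 h2
      have h3 : ‖(2 * (|R| + 1) / ‖ω‖) • ω‖ ≤ ‖x + (2 * (|R| + 1) / ‖ω‖) • ω‖ + ‖x‖ := by
        simpa using norm_sub_le (x + (2 * (|R| + 1) / ‖ω‖) • ω) x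
      rw [norm_smul, Real.norm_eq_abs, abs_of_nonneg (by positivity),
        div_mul_cancel₀ _ hw.ne'] at h3
      linarith [le_abs_self R]
    · rw [hdef, exit_zero hx]; positivity
  have hzero : ∫ x in Ω, (2 * (v x / d x) * fderiv ℝ u x ω + (v x / d x) ^ 2) = 0 := by
    rw [← integral_indicator hO.measurableSet]
    refine integral_dir_zero (Ω := Ω) (ω := ω) (g := fun x => v x ^ 2 / d x) (M := Q * (Q * D))
      (K := 3 * Q ^ 2) ((hcont.measurable.pow_const 2).div hdm) ?_ hb
      (fun x hx => by simp [hv0 x hx]) ?_ ?_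
    · intro x
      have : v x ^ 2 / d x = (v x / d x) * v x := by ring
      rw [this, abs_mul]
      exact mul_le_mul (hq x) ((hvd x).trans (mul_le_mul_of_nonneg_left (hD x) hQ0))
        (abs_nonneg _) hQ0
    · intro x t ht
      rcases lt_or_ge t (d x) with h | h
      · have hs : d (x + t • ω) = d x - t := exit_shift hO (hex x) ht.le h
        have hd1 : 0 < d x - t := by linarith
        have hd2 : 0 < d x := by linarith
        have ha := hvd (x + t • ω)
        have hb' := hvd x
        have hab := hlip x 0 t ht.le
        simp only [zero_smul, add_zero, sub_zero] at hab
        simp only [hs] at ha ⊢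
        generalize v (x + t • ω) = a at *
        generalize v x = b at *
        generalize d x = e at *
        have e1 : a ^ 2 / (e - t) - b ^ 2 / e
            = (a / (e - t)) * (a / e) * t + (a - b) * (a / e + b / e) := by
          field_simp; ring
        have i1 : |a / (e - t)| ≤ Q := by
          rw [abs_div, abs_of_pos hd1, div_le_iff₀ hd1]; exact ha
        have i2 : |a / e| ≤ Q := by
          rw [abs_div, abs_of_pos hd2, div_le_iff₀ hd2]; nlinarith
        have i3 : |b / e| ≤ Q := by
          rw [abs_div, abs_of_pos hd2, div_le_iff₀ hd2]; exact hb'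
        rw [e1]
        have i4 : |(a / (e - t)) * (a / e) * t| ≤ Q * Q * t := by
          rw [abs_mul, abs_mul, abs_of_pos ht]
          gcongr
        have i5 : |(a - b) * (a / e + b / e)| ≤ (Q * t) * (Q + Q) := by
          rw [abs_mul]
          exact mul_le_mul hab ((abs_add_le _ _).trans (add_le_add i2 i3)) (abs_nonneg _)
            (by positivity)
        refine (abs_add_le _ _).trans ?_
        nlinarith
      · have hz : v (x + d x • ω) = 0 := hv0 _ (exit_mem hO (hex x)).2
        have h1 := hlip x (d x) t h
        rw [hz, sub_zero] at h1
        have h2 := hvd x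
        have j : ∀ y, |v y ^ 2 / d y| ≤ Q * |v y| := by
          intro y
          have : v y ^ 2 / d y = (v y / d y) * v y := by ring
          rw [this, abs_mul]
          exact mul_le_mul_of_nonneg_right (hq y) (abs_nonneg _)
        have j1 := j x
        have j2 := j (x + t • ω)
        have j3 := abs_sub (v (x + t • ω) ^ 2 / d (x + t • ω)) (v x ^ 2 / d x)
        have k1 : Q * |v x| ≤ Q * (Q * d x) := mul_le_mul_of_nonneg_left h2 hQ0
        have k2 : Q * |v (x + t • ω)| ≤ Q * (Q * (t - d x)) := mul_le_mul_of_nonneg_left h1 hQ0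
        have k3 : 0 ≤ Q ^ 2 * t := by positivity
        show |v (x + t • ω) ^ 2 / d (x + t • ω) - v x ^ 2 / d x| ≤ _
        nlinarith
    · have : ∀ᵐ x, x ∉ frontier Ω := measure_eq_zero_iff_ae_notMem.1 hnull
      filter_upwards [this] with x hx
      by_cases hxO : x ∈ Ω
      · rw [indicator_of_mem hxO]
        have hdp : 0 < d x := exit_pos hO (hex x) hxO
        have h2 : HasDerivAt (fun t : ℝ => u (x + t • ω)) (fderiv ℝ u x ω) 0 :=
          ((hd x hxO).hasFDerivAt.hasLineDerivAt ω)
        have h3 : HasDerivAt (fun t : ℝ => d x - t) (-1) 0 := by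
          simpa using (hasDerivAt_id (0:ℝ)).const_sub (d x)
        have h4 := (h2.pow 2).div h3 (by simpa using hdp.ne')
        have h5 := HasDerivAt.tendsto_slope_zero_right h4
        have hev : ∀ᶠ t : ℝ in 𝓝[>] 0, t ∈ Ioo (0:ℝ) (d x) := Ioo_mem_nhdsGT hdp
        have hval : (((2 : ℕ) : ℝ) * u (x + (0:ℝ) • ω) ^ (2 - 1) * fderiv ℝ u x ω * (d x - 0)
            - u (x + (0:ℝ) • ω) ^ 2 * (-1)) / (d x - 0) ^ 2
            = 2 * (v x / d x) * fderiv ℝ u x ω + (v x / d x) ^ 2 := by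
          rw [hvu x hxO]
          simp only [zero_smul, add_zero, sub_zero]
          field_simp
          push_cast
          ring
        rw [← hval]
        refine h5.congr' ?_
        · filter_upwards [hev] with t ht
          have hs : d (x + t • ω) = d x - t := exit_shift hO (hex x) ht.1.le ht.2
          simp [hs, hvu x hxO, hvu _ (exit_in ht.1.le ht.2)]
      · have hxc : x ∉ closure Ω := fun h => hx (by rw [hO.frontier_eq]; exact ⟨h, hxO⟩)
        rw [indicator_of_notMem hxO]
        exact dir_tendsto (g := fun x => v x ^ 2 / d x) hxc (fun y hy => by
          show v y ^ 2 / d y = 0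
          rw [hv0 y hy]
          simp)
  have hCint : IntegrableOn
      (fun x => 2 * (v x / d x) * fderiv ℝ u x ω + (v x / d x) ^ 2) Ω := by
    refine Integrable.mono' ((hAint.const_mul 2).add hint) ?_ (Eventually.of_forall fun x => ?_)
    · exact (((measurable_const.mul (hcont.measurable.div hdm)).mul hpd).add
        ((hcont.measurable.div hdm).pow_const 2)).aestronglyMeasurable
    · simp only [Pi.add_apply, Real.norm_eq_abs]
      generalize v x / d x = a
      generalize fderiv ℝ u x ω = b
      rw [abs_le]
      constructor <;> nlinarith [sq_nonneg (a + b), sq_nonneg (a - b), sq_nonneg a]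
  have hmain : (1/2) * ∫ x in Ω, (v x / d x) ^ 2 ≤ 2 * ∫ x in Ω, (fderiv ℝ u x ω) ^ 2 := by
    rw [← integral_const_mul, ← integral_const_mul]
    have := integral_mono (μ := volume.restrict Ω) (hAint.const_mul (1/2))
      (hCint.add (hint.const_mul 2)) (fun x => by
        simp only [Pi.add_apply]
        generalize v x / d x = a
        generalize fderiv ℝ u x ω = b
        nlinarith [sq_nonneg (a + 2 * b)])
    refine this.trans (le_of_eq ?_)
    simp only [Pi.add_apply]
    rw [integral_add hCint (hint.const_mul 2), hzero, zero_add]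
  have heq : EqOn (fun x => (v x / d x) ^ 2) (fun x => (u x / d x) ^ 2) Ω :=
    fun x hx => by simp only [hvu x hx]
  refine ⟨hAint.congr_fun heq hO.measurableSet, ?_⟩
  rw [← setIntegral_congr_fun hO.measurableSet heq]
  linarith
end analysis

section geom2
open Filter Topology
variable {n : ℕ} {Ω : Set (EuclideanSpace ℝ (Fin n))}
  {𝓗 : Finset (Set (EuclideanSpace ℝ (Fin n)))}

lemma hyperplane_null {H : Set (EuclideanSpace ℝ (Fin n))} (hH : IsAffineHyperplane H) :
    volume H = 0 := by
  obtain ⟨v, c, hv, rfl⟩ := hH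
  let s : AffineSubspace ℝ (EuclideanSpace ℝ (Fin n)) :=
    { carrier := {x | ⟪v, x⟫ = c}
      smul_vsub_vadd_mem' := by
        intro a p₁ p₂ p₃ h₁ h₂ h₃
        simp only [mem_ofPred_eq] at *
        simp [inner_add_right, inner_smul_right, inner_sub_right, h₁, h₂, h₃] }
  refine Measure.addHaar_affineSubspace volume s fun h => ?_
  have h1 : ((c + 1) / ‖v‖ ^ 2) • v ∈ s := by rw [h]; trivial
  have h2 : ⟪v, ((c + 1) / ‖v‖ ^ 2) • v⟫ = c := h1
  have h3 : ‖v‖ ≠ 0 := norm_ne_zero_iff.2 hv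
  rw [inner_smul_right, real_inner_self_eq_norm_sq, div_mul_cancel₀ _ (pow_ne_zero 2 h3)] at h2
  linarith

lemma union_null (hΩ : IsPolyhedralDomain Ω 𝓗) : volume (⋃ H ∈ 𝓗, H) = 0 :=
  (measure_biUnion_null_iff 𝓗.countable_toSet).2 fun H hH => hyperplane_null (hΩ.hyperplane H hH)

lemma frontier_null (hΩ : IsPolyhedralDomain Ω 𝓗) : volume (frontier Ω) = 0 :=
  measure_mono_null hΩ.subset_union (union_null hΩ)

lemma chambers (hΩ : IsPolyhedralDomain Ω 𝓗) :
    ∃ 𝓒 : Set (Set (EuclideanSpace ℝ (Fin n))), 𝓒.Finite ∧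
      (∀ C ∈ 𝓒, IsOpen C ∧ Convex ℝ C ∧ C.Nonempty ∧ Disjoint C Ω) ∧
      ∀ p ∈ frontier Ω, ∃ C ∈ 𝓒, p ∈ closure C := by
  classical
  have h0 : ∀ H, ∃ (v : EuclideanSpace ℝ (Fin n)) (c : ℝ), H ∈ 𝓗 → H = {x | ⟪v, x⟫ = c} := by
    intro H
    by_cases hH : H ∈ 𝓗
    · obtain ⟨v, c, -, h⟩ := hΩ.hyperplane H hH
      exact ⟨v, c, fun _ => h⟩
    · exact ⟨0, 0, fun h => absurd h hH⟩
  choose v c hvc using h0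
  let Ch : Finset (Set (EuclideanSpace ℝ (Fin n))) → Set (EuclideanSpace ℝ (Fin n)) := fun T =>
    ⋂ H ∈ 𝓗, if H ∈ T then {x | c H < ⟪v H, x⟫} else {x | ⟪v H, x⟫ < c H}
  have hopen : ∀ T, IsOpen (Ch T) := fun T => by
    refine isOpen_biInter_finset fun H _ => ?_
    split_ifs
    · exact isOpen_lt continuous_const (by fun_prop)
    · exact isOpen_lt (by fun_prop) continuous_const
  have hconv : ∀ T, Convex ℝ (Ch T) := fun T => by
    refine convex_iInter₂ fun H _ => ?_
    have hl : IsLinearMap ℝ (fun x : EuclideanSpace ℝ (Fin n) => ⟪v H, x⟫) :=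
      ⟨fun x y => inner_add_right _ _ _, fun a x => by simp [inner_smul_right]⟩
    split_ifs
    · exact convex_halfSpace_gt hl _
    · exact convex_halfSpace_lt hl _
  have hoff : ∀ T, ∀ x ∈ Ch T, x ∉ ⋃ H ∈ 𝓗, H := by
    intro T x hx hx2
    simp only [mem_iUnion] at hx2
    obtain ⟨H, hH, hxH⟩ := hx2
    have h1 := mem_iInter₂.1 hx H hH
    rw [hvc H hH, mem_ofPred_eq] at hxH
    split_ifs at h1
    · exact absurd h1 (by simp [hxH])
    · exact absurd h1 (by simp [hxH])
  have hin : ∀ x, x ∉ (⋃ H ∈ 𝓗, H) → ∃ T ∈ 𝓗.powerset, x ∈ Ch T := by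
    intro x hx
    refine ⟨𝓗.filter fun H => c H < ⟪v H, x⟫, by simp, ?_⟩
    refine mem_iInter₂.2 fun H hH => ?_
    have hne : ⟪v H, x⟫ ≠ c H := fun h => hx (mem_iUnion₂.2 ⟨H, hH, by rw [hvc H hH]; exact h⟩)
    by_cases hlt : c H < ⟪v H, x⟫
    · simp [hH, hlt]
    · simp only [Finset.mem_filter, hH, hlt, and_false, if_false]
      exact lt_of_le_of_ne (not_lt.1 hlt) hne
  refine ⟨{C | ∃ T ∈ 𝓗.powerset, ((closure Ω)ᶜ ∩ Ch T).Nonempty ∧ Ch T = C}, ?_, ?_, ?_⟩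
  · refine (𝓗.powerset.finite_toSet.image Ch).subset ?_
    rintro _ ⟨T, hT, -, rfl⟩
    exact ⟨T, hT, rfl⟩
  · rintro _ ⟨T, hT, hne, rfl⟩
    refine ⟨hopen T, hconv T, hne.mono inter_subset_right, ?_⟩
    have hsub : Ch T ⊆ (closure Ω)ᶜ := by
      refine (hconv T).isPreconnected.subset_left_of_subset_union
        isClosed_closure.isOpen_compl hΩ.isOpen ?_ ?_ ?_
      · exact disjoint_compl_left.mono_right subset_closure
      · intro x hx
        by_cases hxO : x ∈ Ω
        · exact Or.inr hxO
        · refine Or.inl fun hxc => hoff T x hx (hΩ.subset_union ?_)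
          rw [hΩ.isOpen.frontier_eq]
          exact ⟨hxc, hxO⟩
      · rwa [inter_comm]
    exact (disjoint_compl_left.mono_right subset_closure).mono_left hsub
  · intro p hp
    have hdense : Dense {x | x ∉ ⋃ H ∈ 𝓗, H} :=
      Measure.dense_of_ae (measure_eq_zero_iff_ae_notMem.1 (union_null hΩ))
    have h1 : p ∈ closure (closure Ω)ᶜ := by
      rw [hΩ.frontier_closure, frontier_eq_closure_inter_closure] at hp
      exact hp.2
    have h2 : p ∈ closure ((closure Ω)ᶜ ∩ {x | x ∉ ⋃ H ∈ 𝓗, H}) :=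
      closure_minimal (hdense.open_subset_closure_inter isClosed_closure.isOpen_compl)
        isClosed_closure h1
    have h3 : p ∈ closure (⋃ T ∈ 𝓗.powerset, ((closure Ω)ᶜ ∩ Ch T)) := by
      refine closure_mono ?_ h2
      rintro x ⟨hx1, hx2⟩
      obtain ⟨T, hT, hxT⟩ := hin x hx2
      exact mem_iUnion₂.2 ⟨T, hT, hx1, hxT⟩
    rw [Finset.closure_biUnion] at h3
    obtain ⟨T, hT, hpT⟩ := mem_iUnion₂.1 h3
    exact ⟨Ch T, ⟨T, hT, closure_nonempty_iff.1 ⟨p, hpT⟩, rfl⟩,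
      closure_mono inter_subset_right hpT⟩

lemma chamber_dirs (hb : Bornology.IsBounded Ω)
    {C : Set (EuclideanSpace ℝ (Fin n))} (hC : IsOpen C) (hconv : Convex ℝ C)
    (hne : C.Nonempty) (hdisj : Disjoint C Ω) :
    ∃ (D : Set (EuclideanSpace ℝ (Fin n))) (K : ℝ), D.Finite ∧ 0 < K ∧ ∀ x ∈ Ω, ∀ p ∈ frontier Ω,
      p ∈ closure C → p ∉ Ω → ∃ ω ∈ D, ∃ s : ℝ, 0 < s ∧ s ≤ K * dist x p ∧ x + s • ω ∉ Ω := by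
  obtain ⟨c, hc⟩ := hne
  obtain ⟨r, hr, hball⟩ := Metric.isOpen_iff.1 hC c hc
  obtain ⟨R, hR⟩ := hb.subset_closedBall 0
  obtain ⟨D, -, hDf, hD⟩ := finite_cover_balls_of_compact
    (isCompact_closedBall (0 : EuclideanSpace ℝ (Fin n)) (‖c‖ + R)) (half_pos hr)
  set s0 : ℝ := (4 * |R| + 4) / r with hs0
  have hs0p : 0 < s0 := by positivity
  refine ⟨D, 4 / r * (1 + s0), hDf, by positivity, fun x hx p hp hpC hpO => ?_⟩
  have hpR : ‖p‖ ≤ R := by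
    have := closure_minimal hR isClosed_closedBall (frontier_subset_closure hp)
    simpa using this
  have hxR : ‖x‖ ≤ R := by simpa using hR hx
  have hcp : c - p ∈ closedBall (0 : EuclideanSpace ℝ (Fin n)) (‖c‖ + R) := by
    simpa using (norm_sub_le c p).trans (by linarith)
  obtain ⟨ω, hωD, hω⟩ := mem_iUnion₂.1 (hD hcp)
  rw [mem_ball, dist_eq_norm] at hω
  have hdp : 0 < dist x p := dist_pos.2 fun h => hpO (h ▸ hx)
  refine ⟨ω, hωD, ?_⟩
  rcases lt_or_ge (dist x p) (r / 4) with hlt | hge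
  · set s : ℝ := 4 * dist x p / r with hs
    have hsp : 0 < s := by positivity
    have hs1 : s < 1 := by rw [hs, div_lt_one hr]; linarith
    refine ⟨s, hsp, ?_, fun hmem => ?_⟩
    · have : s = 4 / r * 1 * dist x p := by rw [hs]; ring
      rw [this]
      gcongr
      linarith
    · refine disjoint_left.1 hdisj ?_ hmem
      have hy : p + ω + s⁻¹ • (x - p) ∈ interior C := by
        rw [hC.interior_eq]
        apply hball
        rw [mem_ball, dist_eq_norm]
        have e : p + ω + s⁻¹ • (x - p) - c = -(c - p - ω) + s⁻¹ • (x - p) := by abel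
        rw [e]
        refine (norm_add_le _ _).trans_lt ?_
        rw [norm_neg, norm_smul, Real.norm_eq_abs, abs_of_pos (inv_pos.2 hsp), ← dist_eq_norm x p]
        have : s⁻¹ * dist x p = r / 4 := by rw [hs]; field_simp
        rw [this]
        linarith
      have := hconv.combo_closure_interior_mem_interior hpC hy (a := 1 - s) (b := s)
        (by linarith) hsp (by ring)
      have h2 := interior_subset this
      convert h2 using 1
      rw [smul_add, smul_add, smul_smul, mul_inv_cancel₀ hsp.ne', one_smul, sub_smul, one_smul]
      abel
  · refine ⟨s0, hs0p, ?_, fun hmem => ?_⟩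
    · have h1 : 1 ≤ 4 / r * dist x p := by
        rw [div_mul_eq_mul_div, le_div_iff₀ hr]; linarith
      nlinarith
    · have hcr : r ≤ ‖c - p‖ := by
        by_contra hcon
        have hpC' : p ∈ C := hball (by rw [mem_ball, dist_eq_norm, norm_sub_rev]; linarith)
        obtain ⟨q, hq1, hq2⟩ := mem_closure_iff.1 (frontier_subset_closure hp) C hC hpC'
        exact disjoint_left.1 hdisj hq1 hq2
      have h4 : r / 2 ≤ ‖ω‖ := by
        have := norm_sub_norm_le (c - p) ω
        linarith
      have h2 : ‖x + s0 • ω‖ ≤ R := by simpa using hR hmem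
      have h3 : ‖s0 • ω‖ ≤ ‖x + s0 • ω‖ + ‖x‖ := by
        simpa using norm_sub_le (x + s0 • ω) x
      rw [norm_smul, Real.norm_eq_abs, abs_of_pos hs0p] at h3
      have h5 : s0 * (r / 2) ≤ s0 * ‖ω‖ := mul_le_mul_of_nonneg_left h4 hs0p.le
      have h6 : s0 * (r / 2) = 2 * |R| + 2 := by rw [hs0]; field_simp; ring
      linarith [le_abs_self R]

lemma infDist_sing_pos (hΩ : IsPolyhedralDomain Ω 𝓗) (hS : (polySingularSet Ω 𝓗).Nonempty)
    {x : EuclideanSpace ℝ (Fin n)} (hx : x ∈ Ω) : 0 < infDist x (polySingularSet Ω 𝓗) := by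
  have hsub : polySingularSet Ω 𝓗 ⊆ Ωᶜ := fun y hy => by
    have := hy.1
    rw [hΩ.isOpen.frontier_eq] at this
    exact this.2
  have h1 : 0 < infDist x Ωᶜ :=
    (hΩ.isOpen.isClosed_compl.notMem_iff_infDist_pos (hS.mono hsub)).1 (by simpa using hx)
  exact h1.trans_le (infDist_le_infDist_of_subset hsub hS)

lemma exists_dirs (hΩ : IsPolyhedralDomain Ω 𝓗) (hS : (polySingularSet Ω 𝓗).Nonempty) :
    ∃ (D : Finset (EuclideanSpace ℝ (Fin n))) (K : ℝ), 0 < K ∧ (∀ ω ∈ D, ω ≠ 0) ∧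
      ∀ x ∈ Ω, ∃ ω ∈ D, exitT Ω ω x ≤ K * infDist x (polySingularSet Ω 𝓗) := by
  classical
  obtain ⟨𝓒, hfin, hC, hcov⟩ := chambers hΩ
  have key := fun C (h : C ∈ 𝓒) => chamber_dirs hΩ.isBounded (hC C h).1 (hC C h).2.1
    (hC C h).2.2.1 (hC C h).2.2.2
  choose! D K hDf hK hD using key
  have hUf : (⋃ C ∈ 𝓒, D C).Finite := hfin.biUnion hDf
  obtain ⟨M, hM⟩ := (hfin.image K).bddAbove
  refine ⟨hUf.toFinset.filter (· ≠ 0), 2 * (|M| + 1), by positivity, by simp, fun x hx => ?_⟩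
  have hpos := infDist_sing_pos hΩ hS hx
  obtain ⟨p, hpS, hp⟩ := (infDist_lt_iff hS).1 (show infDist x (polySingularSet Ω 𝓗)
    < 2 * infDist x (polySingularSet Ω 𝓗) by linarith)
  have hpO : p ∉ Ω := by
    have := hpS.1
    rw [hΩ.isOpen.frontier_eq] at this
    exact this.2
  obtain ⟨C, hCm, hpC⟩ := hcov p hpS.1
  obtain ⟨ω, hω, s, hs0, hs, hout⟩ := hD C hCm x hx p hpS.1 hpC hpO
  have hω0 : ω ≠ 0 := by
    rintro rfl
    simp [hx] at hout
  refine ⟨ω, ?_, (exit_le hs0.le hout).trans (hs.trans ?_)⟩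
  · simp only [Finset.mem_filter, Finite.mem_toFinset]
    exact ⟨mem_iUnion₂.2 ⟨C, hCm, hω⟩, hω0⟩
  · have h1 : K C ≤ |M| + 1 := (hM ⟨C, hCm, rfl⟩).trans (by linarith [le_abs_self M])
    calc K C * dist x p ≤ (|M| + 1) * (2 * infDist x (polySingularSet Ω 𝓗)) := by
          gcongr
      _ = _ := by ring
end geom2

lemma gradient_norm_sq {n : ℕ} (u : EuclideanSpace ℝ (Fin n) → ℝ)
    (x : EuclideanSpace ℝ (Fin n)) :
    ‖gradient u x‖ ^ 2 = ∑ j : Fin n, (fderiv ℝ u x (EuclideanSpace.single j 1)) ^ 2 := by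
  rw [EuclideanSpace.norm_sq_eq]
  refine Finset.sum_congr rfl fun j _ => ?_
  have h : ⟪gradient u x, EuclideanSpace.single j (1:ℝ)⟫
      = fderiv ℝ u x (EuclideanSpace.single j 1) := by
    rw [gradient, InnerProductSpace.toDual_symm_apply]
  rw [← h, Real.norm_eq_abs, sq_abs, EuclideanSpace.inner_single_right, one_mul]
  rfl

lemma gradient_norm {n : ℕ} (u : EuclideanSpace ℝ (Fin n) → ℝ)
    (x : EuclideanSpace ℝ (Fin n)) : ‖gradient u x‖ = ‖fderiv ℝ u x‖ := by
  rw [gradient, LinearIsometryEquiv.norm_map]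

/-- Green's identity. -/
lemma green {n : ℕ} {Ω : Set (EuclideanSpace ℝ (Fin n))} (hO : IsOpen Ω)
    (hb : Bornology.IsBounded Ω) (hnull : volume (frontier Ω) = 0)
    {U : Set (EuclideanSpace ℝ (Fin n))} (hU : IsOpen U) (hUc : closure Ω ⊆ U)
    {u : EuclideanSpace ℝ (Fin n) → ℝ} (hu : ContDiffOn ℝ 2 u U)
    (hz : ∀ x ∈ frontier Ω, u x = 0) :
    ContinuousOn (laplaceOp u) U ∧ ContinuousOn (fun x => ‖gradient u x‖ ^ 2) U ∧
    ∫ x in Ω, ‖gradient u x‖ ^ 2 = - ∫ x in Ω, u x * laplaceOp u x := by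
  have hu1 : ContDiffOn ℝ 1 u U := hu.of_le (by norm_num)
  have hfd : ContDiffOn ℝ 1 (fderiv ℝ u) U := hu.fderiv_of_isOpen hU (by norm_num)
  have hpj : ∀ ω : EuclideanSpace ℝ (Fin n), ContDiffOn ℝ 1 (fun y => fderiv ℝ u y ω) U :=
    fun ω => hfd.clm_apply contDiffOn_const
  have hlap : ContinuousOn (laplaceOp u) U := by
    refine continuousOn_finsetSum _ fun j _ => ?_
    exact ((hpj _).continuousOn_fderiv_of_isOpen hU le_rfl).clm_apply continuousOn_const
  have hgr : ContinuousOn (fun x => ‖gradient u x‖ ^ 2) U := by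
    simp only [gradient_norm]
    exact hfd.continuousOn.norm.pow 2
  refine ⟨hlap, hgr, ?_⟩
  have hI : ∀ {f : EuclideanSpace ℝ (Fin n) → ℝ}, ContinuousOn f U → IntegrableOn f Ω :=
    fun hf => ((hf.mono hUc).integrableOn_compact hb.isCompact_closure).mono_set subset_closure
  have hsum : ∑ j : Fin n, ∫ x in Ω, fderiv ℝ (fun y => u y *
      fderiv ℝ u y (EuclideanSpace.single j 1)) x (EuclideanSpace.single j 1) = 0 :=
    Finset.sum_eq_zero fun j _ => integral_fderiv_zero hO hb hnull hU hUc (hu1.mul (hpj _))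
      (fun x hx => by simp [hz x hx]) _
  have hulI : IntegrableOn (fun x => u x * laplaceOp u x) Ω := hI (hu.continuousOn.mul hlap)
  rw [← integral_finsetSum] at hsum
  · rw [eq_neg_iff_add_eq_zero, ← integral_add (hI hgr) hulI, ← hsum]
    refine setIntegral_congr_fun hO.measurableSet fun x hx => ?_
    have hxU : U ∈ nhds x := hU.mem_nhds (hUc (subset_closure hx))
    simp only [gradient_norm_sq, laplaceOp, Finset.mul_sum, ← Finset.sum_add_distrib]
    refine Finset.sum_congr rfl fun j _ => ?_
    have d1 : DifferentiableAt ℝ u x := (hu1.differentiableOn one_ne_zero).differentiableAt hxU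
    have d2 := ((hpj (EuclideanSpace.single j 1)).differentiableOn one_ne_zero).differentiableAt hxU
    rw [fderiv_fun_mul d1 d2]
    simp
    ring
  · intro j _
    exact hI ((((hu1.mul (hpj (EuclideanSpace.single j 1)))).continuousOn_fderiv_of_isOpen hU
      le_rfl).clm_apply continuousOn_const)

/-- Stability estimate for the Dirichlet problem on a bounded polyhedral domain:
`‖u‖²_{K^1_1(Ω)} ≤ κ ‖Δu‖²_{K^0_{-1}(Ω)}` for functions vanishing on the boundary. -/
theorem dirichlet_stability_polyhedral {n : ℕ} (hn : 2 ≤ n)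
    (Ω : Set (EuclideanSpace ℝ (Fin n))) (𝓗 : Finset (Set (EuclideanSpace ℝ (Fin n))))
    (hΩ : IsPolyhedralDomain Ω 𝓗) (hS : (polySingularSet Ω 𝓗).Nonempty) :
    ∃ κ : ℝ, 0 < κ ∧ ∀ u : EuclideanSpace ℝ (Fin n) → ℝ,
      (∃ U : Set (EuclideanSpace ℝ (Fin n)), IsOpen U ∧ closure Ω ⊆ U ∧
        ContDiffOn ℝ 2 u U) →
      (∀ x ∈ frontier Ω, u x = 0) →
      (∫⁻ x in Ω, ENNReal.ofReal (u x ^ 2 / infDist x (polySingularSet Ω 𝓗) ^ 2)) +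
          (∫⁻ x in Ω, ENNReal.ofReal (‖gradient u x‖ ^ 2)) ≤
        ENNReal.ofReal κ *
          ∫⁻ x in Ω, ENNReal.ofReal
            (infDist x (polySingularSet Ω 𝓗) ^ 2 * laplaceOp u x ^ 2) := by
  classical
  obtain ⟨D, K, hK, hD0, hD⟩ := exists_dirs hΩ hS
  have hO := hΩ.isOpen
  have hb := hΩ.isBounded
  have hnull := frontier_null hΩ
  set η : EuclideanSpace ℝ (Fin n) → ℝ := fun x => infDist x (polySingularSet Ω 𝓗) with hη
  have hηpos : ∀ x ∈ Ω, 0 < η x := fun x hx => infDist_sing_pos hΩ hS hx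
  have hηc : Continuous η := continuous_infDist_pt _
  set P : ℝ := K ^ 2 * ∑ ω ∈ D, 4 * ‖ω‖ ^ 2 + 1 with hP
  have hP0 : 0 < P := by positivity
  refine ⟨P ^ 2 + P, by positivity, ?_⟩
  rintro u ⟨U, hU, hUc, hu⟩ hz
  have hu1 : ContDiffOn ℝ 1 u U := hu.of_le (by norm_num)
  obtain ⟨hlap, hgr, hgreen⟩ := green hO hb hnull hU hUc hu hz
  obtain ⟨L, hL0, hL⟩ := lip_indicator hO hb hU hUc hu1 hz
  have hI : ∀ {f : EuclideanSpace ℝ (Fin n) → ℝ}, ContinuousOn f U → IntegrableOn f Ω :=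
    fun hf => ((hf.mono hUc).integrableOn_compact hb.isCompact_closure).mono_set subset_closure
  have hfc : ContinuousOn (fderiv ℝ u) U := hu1.continuousOn_fderiv_of_isOpen hU le_rfl
  have hpdI : ∀ ω, IntegrableOn (fun x => (fderiv ℝ u x ω) ^ 2) Ω := fun ω =>
    hI ((hfc.clm_apply continuousOn_const).pow 2)
  have hdiff : ∀ x ∈ Ω, DifferentiableAt ℝ u x := fun x hx =>
    (hu1.differentiableOn one_ne_zero).differentiableAt (hU.mem_nhds (hUc (subset_closure hx)))
  have hardy := fun ω (h : ω ∈ D) =>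
    hardy_dir hO hb hnull hdiff hL0 hL (hD0 ω h) (hpdI ω)
  have hBI : IntegrableOn (fun x => ‖gradient u x‖ ^ 2) Ω := hI hgr
  have hGI : IntegrableOn (fun x => η x ^ 2 * laplaceOp u x ^ 2) Ω :=
    hI ((hηc.continuousOn.pow 2).mul (hlap.pow 2))
  have hsumI : IntegrableOn (fun x => K ^ 2 * ∑ ω ∈ D, (u x / exitT Ω ω x) ^ 2) Ω :=
    (integrable_finsetSum D fun ω h => (hardy ω h).1).const_mul (K ^ 2)
  have hpt : ∀ x ∈ Ω, u x ^ 2 / η x ^ 2 ≤ K ^ 2 * ∑ ω ∈ D, (u x / exitT Ω ω x) ^ 2 := by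
    intro x hx
    obtain ⟨ω, hω, hle⟩ := hD x hx
    have hdp := exit_pos hO (exit_exists hb (hD0 ω hω) x) hx
    have h1 : (u x / exitT Ω ω x) ^ 2 ≤ ∑ ω ∈ D, (u x / exitT Ω ω x) ^ 2 :=
      Finset.single_le_sum (f := fun ω => (u x / exitT Ω ω x) ^ 2) (fun _ _ => sq_nonneg _) hω
    refine le_trans ?_ (mul_le_mul_of_nonneg_left h1 (sq_nonneg K))
    have h2 : exitT Ω ω x ^ 2 ≤ (K * η x) ^ 2 := pow_le_pow_left₀ hdp.le hle 2
    have h3 : 0 < η x ^ 2 := pow_pos (hηpos x hx) 2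
    have h4 : 0 < exitT Ω ω x ^ 2 := pow_pos hdp 2
    rw [div_pow, ← mul_div_assoc, div_le_div_iff₀ h3 h4]
    nlinarith [mul_le_mul_of_nonneg_left h2 (sq_nonneg (u x))]
  have hAI : IntegrableOn (fun x => u x ^ 2 / η x ^ 2) Ω := by
    refine Integrable.mono' hsumI ?_ ?_
    · refine ContinuousOn.aestronglyMeasurable ?_ hO.measurableSet
      exact ((hu.continuousOn.mono (subset_closure.trans hUc)).pow 2).div
        (hηc.continuousOn.pow 2) fun x hx => (pow_pos (hηpos x hx) 2).ne'
    · refine (ae_restrict_iff' hO.measurableSet).2 (Filter.Eventually.of_forall fun x hx => ?_)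
      rw [Real.norm_eq_abs, abs_of_nonneg (by positivity)]
      exact hpt x hx
  set A := ∫ x in Ω, u x ^ 2 / η x ^ 2 with hA
  set B := ∫ x in Ω, ‖gradient u x‖ ^ 2 with hB
  set G := ∫ x in Ω, η x ^ 2 * laplaceOp u x ^ 2 with hG
  have hB0 : 0 ≤ B := integral_nonneg fun x => by positivity
  have hG0 : 0 ≤ G := integral_nonneg fun x => by positivity
  have hAB : A ≤ P * B := by
    have h1 : A ≤ K ^ 2 * ∑ ω ∈ D, ∫ x in Ω, (u x / exitT Ω ω x) ^ 2 := by
      rw [← integral_finsetSum D fun ω h => (hardy ω h).1, ← integral_const_mul]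
      exact setIntegral_mono_on hAI hsumI hO.measurableSet hpt
    have h2 : ∑ ω ∈ D, ∫ x in Ω, (u x / exitT Ω ω x) ^ 2 ≤ ∑ ω ∈ D, 4 * ‖ω‖ ^ 2 * B := by
      refine Finset.sum_le_sum fun ω h => (hardy ω h).2.trans ?_
      rw [mul_assoc]
      refine mul_le_mul_of_nonneg_left ?_ (by norm_num : (0:ℝ) ≤ 4)
      rw [hB, ← integral_const_mul]
      refine integral_mono (hpdI ω) (hBI.const_mul _) fun x => ?_
      simp only [gradient_norm]
      rw [← mul_pow, ← sq_abs, mul_comm]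
      exact pow_le_pow_left₀ (abs_nonneg _) ((fderiv ℝ u x).le_opNorm ω) 2
    rw [← Finset.sum_mul] at h2
    have h3 := mul_le_mul_of_nonneg_left h2 (sq_nonneg K)
    rw [hP, add_mul, one_mul, mul_assoc]
    linarith
  have hBG : B ≤ (1 / (2 * P)) * A + (P / 2) * G := by
    rw [hgreen, ← integral_neg, hA, hG, ← integral_const_mul, ← integral_const_mul,
      ← integral_add (hAI.const_mul _) (hGI.const_mul _)]
    refine setIntegral_mono_on (hI (hu.continuousOn.mul hlap)).neg
      ((hAI.const_mul _).add (hGI.const_mul _)) hO.measurableSet fun x hx => ?_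
    have h1 := hηpos x hx
    have e1 : -(u x * laplaceOp u x) = -((u x / η x) * (η x * laplaceOp u x)) := by
      field_simp
    rw [e1, ← div_pow, ← mul_pow]
    generalize u x / η x = a
    generalize η x * laplaceOp u x = b
    have : 1 / (2 * P) * a ^ 2 + P / 2 * b ^ 2 - -(a * b) = (a + P * b) ^ 2 / (2 * P) := by
      field_simp
      ring
    have h2 : 0 ≤ (a + P * b) ^ 2 / (2 * P) := by positivity
    linarith
  have hBG' : B ≤ P * G := by
    have : 1 / (2 * P) * A ≤ 1 / (2 * P) * (P * B) :=
      mul_le_mul_of_nonneg_left hAB (by positivity)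
    have e : 1 / (2 * P) * (P * B) = B / 2 := by field_simp
    linarith
  have hfinal : A + B ≤ (P ^ 2 + P) * G := by
    nlinarith [mul_le_mul_of_nonneg_left hBG' hP0.le]
  rw [← ofReal_integral_eq_lintegral_ofReal hAI (Filter.Eventually.of_forall fun x => by positivity),
    ← ofReal_integral_eq_lintegral_ofReal hBI (Filter.Eventually.of_forall fun x => by positivity),
    ← ofReal_integral_eq_lintegral_ofReal hGI (Filter.Eventually.of_forall fun x => by positivity),
    ← ENNReal.ofReal_add (integral_nonneg fun x => by positivity) hB0,
    ← ENNReal.ofReal_mul (by positivity)]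
  exact ENNReal.ofReal_le_ofReal hfinal
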